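/- arXiv:2401.07848 — 2 statements merged into one kernel-verified Lean document; each statement's English description precedes it below -/
import Mathlib

section
/- Let h : ℝ⁴ → ℂ be smooth and nowhere vanishing, and define the matrix-valued function M_h : ℝ⁴ → M₄(ℂ), M_h(x) := diag(|h(x)|² I₂, |h(x)|^{−2} I₂) (this is the adjoint action Ad(u_h) = u_h 𝒥 u_h 𝒥⁻¹ of the twisted unitary u_h = (h, 1/conj(h))). Then for every smooth ψ : ℝ⁴ → ℂ⁴ and every x ∈ ℝ⁴: M_h(x) · ( −i Σ_{μ=0}^{3} γ^μ ∂_μ(M_h ψ)(x) ) = −i Σ_{μ=0}^{3} γ^μ (∂_μ ψ)(x) − i Σ_{μ=0}^{3} (∂_μ (log |h|²))(x) · γ^μ Γ₅ ψ(x). In other words, conjugating the flat Dirac operator by M_h generates the torsion term −i γ^μ f_μ Γ₅ with f = d(log|h|²). -/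
open Matrix

/-- The chiral Euclidean Dirac matrices on ℝ⁴:
`γ^a = fromBlocks 0 σ^a σ̃^a 0` with `σ^0 = σ̃^0 = I₂`, `σ^j = −iσⱼ`, `σ̃^j = iσⱼ`. -/
noncomputable def γE : Fin 4 → Matrix (Fin 4) (Fin 4) ℂ :=
  ![!![0, 0, 1, 0; 0, 0, 0, 1; 1, 0, 0, 0; 0, 1, 0, 0],
    !![0, 0, 0, -Complex.I; 0, 0, -Complex.I, 0;
       0, Complex.I, 0, 0; Complex.I, 0, 0, 0],
    !![0, 0, 0, -1; 0, 0, 1, 0; 0, 1, 0, 0; -1, 0, 0, 0],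
    !![0, 0, -Complex.I, 0; 0, 0, 0, Complex.I;
       Complex.I, 0, 0, 0; 0, -Complex.I, 0, 0]]

/-- The grading `Γ₅ = diag(I₂, −I₂)`. -/
noncomputable def Γ₅ : Matrix (Fin 4) (Fin 4) ℂ :=
  !![1, 0, 0, 0; 0, 1, 0, 0; 0, 0, -1, 0; 0, 0, 0, -1]

/-- The adjoint action `Ad(u_h) = diag(|h|² I₂, |h|⁻² I₂)` of the twisted unitary
`u_h = (h, 1/conj h)`. -/
noncomputable def Mh (h : (Fin 4 → ℝ) → ℂ) (x : Fin 4 → ℝ) : Matrix (Fin 4) (Fin 4) ℂ :=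
  Matrix.diagonal
    ![((‖h x‖ ^ 2 : ℝ) : ℂ), ((‖h x‖ ^ 2 : ℝ) : ℂ),
      (((‖h x‖ ^ 2 : ℝ) : ℂ))⁻¹, (((‖h x‖ ^ 2 : ℝ) : ℂ))⁻¹]

/-- Conjugating the flat Dirac operator by `Ad(u_h)` generates the torsion term
`−i γ^μ f_μ Γ₅` with `f = d(log |h|²)`. -/
theorem statement10 (h : (Fin 4 → ℝ) → ℂ) (hsm : ContDiff ℝ (⊤ : ℕ∞) h)
    (hnz : ∀ x, h x ≠ 0)
    (ψ : (Fin 4 → ℝ) → Fin 4 → ℂ) (hψ : ContDiff ℝ (⊤ : ℕ∞) ψ) (x : Fin 4 → ℝ) :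
    Mh h x *ᵥ
        ((-Complex.I) • ∑ μ : Fin 4,
          γE μ *ᵥ fderiv ℝ (fun y => Mh h y *ᵥ ψ y) x (Pi.single μ 1)) =
      (-Complex.I) • (∑ μ : Fin 4, γE μ *ᵥ fderiv ℝ ψ x (Pi.single μ 1)) -
        Complex.I • ∑ μ : Fin 4,
          ((fderiv ℝ (fun y => Real.log (‖h y‖ ^ 2)) x (Pi.single μ 1) : ℝ) : ℂ) •
            ((γE μ * Γ₅) *ᵥ ψ x) := by
  have hg : DifferentiableAt ℝ (fun y => ‖h y‖ ^ 2) x :=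
    ((hsm.norm_sq ℝ).differentiable (by simp)).differentiableAt
  have hψd : HasFDerivAt ψ (fderiv ℝ ψ x) x :=
    (hψ.differentiable (by simp)).differentiableAt.hasFDerivAt
  have hg0 : ‖h x‖ ^ 2 ≠ 0 := by simpa using hnz x
  have hgd := hg.hasFDerivAt
  have hlog := (hgd.log hg0).fderiv
  rw [hlog]
  generalize fderiv ℝ (fun y => ‖h y‖ ^ 2) x = g' at hgd
  generalize fderiv ℝ ψ x = ψ' at hψd
  have hc : HasFDerivAt (fun y => ((‖h y‖ ^ 2 : ℝ) : ℂ)) (Complex.ofRealCLM.comp g') x :=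
    Complex.ofRealCLM.hasFDerivAt.comp x hgd
  have hc0 : ((‖h x‖ ^ 2 : ℝ) : ℂ) ≠ 0 := by exact_mod_cast hg0
  have hi : HasFDerivAt (fun y => (((‖h y‖ ^ 2)⁻¹ : ℝ) : ℂ))
      (Complex.ofRealCLM.comp ((-((‖h x‖ ^ 2) ^ 2)⁻¹) • g')) x :=
    Complex.ofRealCLM.hasFDerivAt.comp x ((hasDerivAt_inv hg0).comp_hasFDerivAt x hgd)
  have hψi := hasFDerivAt_pi'.1 hψd
  have hdiff : DifferentiableAt ℝ (fun y => Mh h y *ᵥ ψ y) x := by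
    rw [differentiableAt_pi]
    intro i
    fin_cases i
    · exact ((hc.mul (hψi 0)).congr_of_eventuallyEq
        (.of_forall fun y => by simp [Mh, mulVec_diagonal])).differentiableAt
    · exact ((hc.mul (hψi 1)).congr_of_eventuallyEq
        (.of_forall fun y => by simp [Mh, mulVec_diagonal])).differentiableAt
    · exact ((hi.mul (hψi 2)).congr_of_eventuallyEq
        (.of_forall fun y => by simp [Mh, mulVec_diagonal])).differentiableAt
    · exact ((hi.mul (hψi 3)).congr_of_eventuallyEq
        (.of_forall fun y => by simp [Mh, mulVec_diagonal])).differentiableAt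
  have hF := hasFDerivAt_pi'.1 hdiff.hasFDerivAt
  generalize fderiv ℝ (fun y => Mh h y *ᵥ ψ y) x = F at hF
  have e0 (v) : F v 0 = _ := DFunLike.congr_fun ((hF 0).unique
    ((hc.mul (hψi 0)).congr_of_eventuallyEq (.of_forall fun y => by simp [Mh, mulVec_diagonal]))) v
  have e1 (v) : F v 1 = _ := DFunLike.congr_fun ((hF 1).unique
    ((hc.mul (hψi 1)).congr_of_eventuallyEq (.of_forall fun y => by simp [Mh, mulVec_diagonal]))) v
  have e2 (v) : F v 2 = _ := DFunLike.congr_fun ((hF 2).unique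
    ((hi.mul (hψi 2)).congr_of_eventuallyEq (.of_forall fun y => by simp [Mh, mulVec_diagonal]))) v
  have e3 (v) : F v 3 = _ := DFunLike.congr_fun ((hF 3).unique
    ((hi.mul (hψi 3)).congr_of_eventuallyEq (.of_forall fun y => by simp [Mh, mulVec_diagonal]))) v
  simp only [_root_.add_apply, _root_.smul_apply,
    ContinuousLinearMap.comp_apply, ContinuousLinearMap.proj_apply, Complex.ofRealCLM_apply,
    smul_eq_mul] at e0 e1 e2 e3
  have hM : Mh h x = Matrix.diagonal
    ![((‖h x‖ ^ 2 : ℝ) : ℂ), ((‖h x‖ ^ 2 : ℝ) : ℂ),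
      (((‖h x‖ ^ 2 : ℝ) : ℂ))⁻¹, (((‖h x‖ ^ 2 : ℝ) : ℂ))⁻¹] := rfl
  rw [hM]
  simp only [Fin.sum_univ_four, _root_.smul_apply, smul_eq_mul]
  generalize (Pi.single 0 1 : Fin 4 → ℝ) = v0
  generalize (Pi.single 1 1 : Fin 4 → ℝ) = v1
  generalize (Pi.single 2 1 : Fin 4 → ℝ) = v2
  generalize (Pi.single 3 1 : Fin 4 → ℝ) = v3
  generalize ‖h x‖ ^ 2 = r at *
  ext i
  fin_cases i <;>
  · simp [mulVec_diagonal, γE, Γ₅, Matrix.mulVec, dotProduct, Fin.sum_univ_four,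
      Matrix.mul_apply, e0, e1, e2, e3]
    field_simp
    ring
end

section
/- Let f : ℝ⁴ → ℝ⁴ be smooth (with components f_μ) and define the twisted-covariant Dirac operator D_f ψ := −i Σ_μ γ^μ (∂_μ ψ) − i Σ_μ f_μ γ^μ Γ₅ ψ on smooth spinor fields ψ : ℝ⁴ → ℂ⁴. Let h' : ℝ⁴ → ℂ be smooth and nowhere vanishing and M_{h'}(x) := diag(|h'(x)|² I₂, |h'(x)|^{−2} I₂). Then for every smooth ψ and every x ∈ ℝ⁴: M_{h'}(x) · (D_f (M_{h'} ψ))(x) = −i Σ_μ γ^μ (∂_μ ψ)(x) − i Σ_μ ( f_μ(x) + ∂_μ(log|h'|²)(x) ) γ^μ Γ₅ ψ(x). That is, the conjugate action of the twisted unitary u_{h'} maps the 1-form f to f + d(log|h'|²). -/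
open Matrix

/-- The twisted-covariant Dirac operator `D_f ψ = −i γ^μ ∂_μ ψ − i f_μ γ^μ Γ₅ ψ`. -/
noncomputable def Dirac (f : (Fin 4 → ℝ) → Fin 4 → ℝ)
    (ψ : (Fin 4 → ℝ) → Fin 4 → ℂ) (x : Fin 4 → ℝ) : Fin 4 → ℂ :=
  (-Complex.I) • (∑ μ : Fin 4, γE μ *ᵥ fderiv ℝ ψ x (Pi.single μ 1)) -
    Complex.I • ∑ μ : Fin 4, ((f x μ : ℝ) : ℂ) • ((γE μ * Γ₅) *ᵥ ψ x)

theorem aux_fderiv (h : (Fin 4 → ℝ) → ℂ) (ψ : (Fin 4 → ℝ) → Fin 4 → ℂ) (x v : Fin 4 → ℝ)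
    (G : (Fin 4 → ℝ) →L[ℝ] ℝ) (hG : HasFDerivAt (fun y => ‖h y‖ ^ 2) G x)
    (hx : ‖h x‖ ^ 2 ≠ 0) (hψ : DifferentiableAt ℝ ψ x) :
    fderiv ℝ (fun y => Mh h y *ᵥ ψ y) x v =
      Mh h x *ᵥ (fderiv ℝ ψ x v + (((G v / ‖h x‖ ^ 2 : ℝ)) : ℂ) • (Γ₅ *ᵥ ψ x)) := by
  have hc : HasFDerivAt (fun y => ((‖h y‖ ^ 2 : ℝ) : ℂ)) (Complex.ofRealCLM.comp G) x :=
    Complex.ofRealCLM.hasFDerivAt.comp x hG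
  have hx' : ((‖h x‖ : ℝ) : ℂ) ≠ 0 := by simpa using hx
  have hr : HasFDerivAt (fun y => ((‖h y‖ ^ 2)⁻¹ : ℝ)) (-((‖h x‖ ^ 2) ^ 2)⁻¹ • G) x :=
    (hasDerivAt_inv hx).comp_hasFDerivAt x hG
  have hi : HasFDerivAt (fun y => ((‖h y‖ ^ 2 : ℝ) : ℂ)⁻¹)
      (Complex.ofRealCLM.comp (-((‖h x‖ ^ 2) ^ 2)⁻¹ • G)) x := by
    have := Complex.ofRealCLM.hasFDerivAt.comp x hr
    refine this.congr_of_eventuallyEq (Filter.Eventually.of_forall fun y => ?_)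
    simp
  have hp : ∀ i, HasFDerivAt (fun y => ψ y i)
      ((ContinuousLinearMap.proj i : (Fin 4 → ℂ) →L[ℝ] ℂ).comp (fderiv ℝ ψ x)) x :=
    hasFDerivAt_pi'.1 hψ.hasFDerivAt
  have hd : ∀ i, DifferentiableAt ℝ (fun y => (Mh h y *ᵥ ψ y) i) x := by
    intro i
    simp only [Mh, mulVec_diagonal]
    fin_cases i
    · exact (hc.mul (hp 0)).differentiableAt
    · exact (hc.mul (hp 1)).differentiableAt
    · exact (hi.mul (hp 2)).differentiableAt
    · exact (hi.mul (hp 3)).differentiableAt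
  ext i
  have e : fderiv ℝ (fun y => Mh h y *ᵥ ψ y) x v i
      = fderiv ℝ (fun y => (Mh h y *ᵥ ψ y) i) x v := by
    rw [fderiv_pi hd]; rfl
  rw [e]
  simp only [Mh, mulVec_diagonal]
  fin_cases i
  · refine (congrArg (fun L => L v) (hc.mul (hp 0)).fderiv).trans ?_
    simp [Γ₅, mulVec, dotProduct, Fin.sum_univ_four]
    field_simp
    try ring
  · refine (congrArg (fun L => L v) (hc.mul (hp 1)).fderiv).trans ?_
    simp [Γ₅, mulVec, dotProduct, Fin.sum_univ_four]
    field_simp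
    try ring
  · refine (congrArg (fun L => L v) (hi.mul (hp 2)).fderiv).trans ?_
    simp [Γ₅, mulVec, dotProduct, Fin.sum_univ_four]
    field_simp
    try ring
  · refine (congrArg (fun L => L v) (hi.mul (hp 3)).fderiv).trans ?_
    simp [Γ₅, mulVec, dotProduct, Fin.sum_univ_four]
    field_simp
    try ring

theorem aux_conj (h : (Fin 4 → ℝ) → ℂ) (x : Fin 4 → ℝ) (hx : h x ≠ 0) (μ : Fin 4) :
    Mh h x * γE μ * Mh h x = γE μ := by
  have hx' : ((‖h x‖ : ℝ) : ℂ) ≠ 0 := by simpa using hx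
  ext i j
  simp only [Mh, mul_diagonal, diagonal_mul]
  fin_cases μ <;> fin_cases i <;> fin_cases j <;> simp [γE] <;> field_simp

theorem aux_comm (h : (Fin 4 → ℝ) → ℂ) (x : Fin 4 → ℝ) :
    Γ₅ * Mh h x = Mh h x * Γ₅ := by
  ext i j
  simp only [Mh, mul_diagonal, diagonal_mul]
  fin_cases i <;> fin_cases j <;> simp [Γ₅]

/-- The conjugate action of the twisted unitary `u_{h'}` on the twisted-covariant Dirac
operator `D_f` maps the 1-form `f` to `f + d(log |h'|²)`. -/
theorem statement11 (f : (Fin 4 → ℝ) → Fin 4 → ℝ) (hf : ContDiff ℝ (⊤ : ℕ∞) f)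
    (h' : (Fin 4 → ℝ) → ℂ) (hsm : ContDiff ℝ (⊤ : ℕ∞) h') (hnz : ∀ x, h' x ≠ 0)
    (ψ : (Fin 4 → ℝ) → Fin 4 → ℂ) (hψ : ContDiff ℝ (⊤ : ℕ∞) ψ) (x : Fin 4 → ℝ) :
    Mh h' x *ᵥ Dirac f (fun y => Mh h' y *ᵥ ψ y) x =
      (-Complex.I) • (∑ μ : Fin 4, γE μ *ᵥ fderiv ℝ ψ x (Pi.single μ 1)) -
        Complex.I • ∑ μ : Fin 4,
          (((f x μ + fderiv ℝ (fun y => Real.log (‖h' y‖ ^ 2)) x (Pi.single μ 1) : ℝ)) : ℂ) •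
            ((γE μ * Γ₅) *ᵥ ψ x) := by
  have hx : ‖h' x‖ ^ 2 ≠ 0 := by simpa using hnz x
  have hd : DifferentiableAt ℝ (fun y => ‖h' y‖ ^ 2) x :=
    ((hsm.norm_sq ℝ).differentiable (by simp)).differentiableAt
  have hψd : DifferentiableAt ℝ ψ x := (hψ.differentiable (by simp)).differentiableAt
  have hlog : ∀ v, fderiv ℝ (fun y => Real.log (‖h' y‖ ^ 2)) x v
      = fderiv ℝ (fun y => ‖h' y‖ ^ 2) x v / ‖h' x‖ ^ 2 := by
    intro v
    rw [(hd.hasFDerivAt.log hx).fderiv]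
    simp [div_eq_inv_mul]
  have k1 : ∀ μ w, Mh h' x *ᵥ (γE μ *ᵥ (Mh h' x *ᵥ w)) = γE μ *ᵥ w := by
    intro μ w
    rw [mulVec_mulVec, mulVec_mulVec, aux_conj h' x (hnz x)]
  have k2 : ∀ w, Γ₅ *ᵥ (Mh h' x *ᵥ w) = Mh h' x *ᵥ (Γ₅ *ᵥ w) := by
    intro w
    rw [mulVec_mulVec, mulVec_mulVec, aux_comm]
  simp only [hlog, Dirac, aux_fderiv h' ψ x _ _ hd.hasFDerivAt hx hψd, mulVec_sub, mulVec_smul,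
    mulVec_sum, ← mulVec_mulVec, k1, k2, mulVec_add, Finset.sum_add_distrib, Complex.ofReal_add,
    add_smul, smul_add, neg_smul, mulVec_neg]
  abel
end
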